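/- Let k = ℤ[β_{a,b} : (a,b) ∈ ℕ² ∖ {(0,0)}] and let p(x,y) = 1 + Σ_{(a,b)≠(0,0)} β_{a,b} xᵃyᵇ ∈ k⟦x,y⟧ be the generic power series with constant term 1. In k⟦x₁,x₂⟧, let ρ₁ be the unique power series with (x₁ − x₂)·ρ₁ = x₁·p(x₁,x₂) − x₂·p(x₂,x₁), and let E₁ = x₁ + x₂, E₂ = x₁x₂. Then the three elements ρ₁, E₁, E₂ of k⟦x₁,x₂⟧ are algebraically independent over ℤ. -/

import Mathlib

noncomputable section
open MvPowerSeries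

/-- The polynomial ring `ℤ[β_{a,b} : (a,b) ≠ (0,0)]`. -/
abbrev BetaRing : Type := MvPolynomial {ab : ℕ × ℕ // ab ≠ (0, 0)} ℤ

/-- The generic power series `p(x,y) = 1 + Σ β_{a,b} xᵃyᵇ` with constant term `1`. -/
def genericP : MvPowerSeries (Fin 2) BetaRing :=
  fun d => if h : (d 0, d 1) = (0, 0) then 1 else MvPolynomial.X ⟨(d 0, d 1), h⟩

/-- The automorphism of `k⟦x₁,x₂⟧` exchanging the two variables. -/
def swapPS {k : Type*} [CommRing k] (f : MvPowerSeries (Fin 2) k) : MvPowerSeries (Fin 2) k :=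
  fun d => MvPowerSeries.coeff (Finsupp.equivMapDomain (Equiv.swap 0 1) d) f

/-- Substitution of a family of power series (each with zero constant term) into a
multivariate power series, via the standard coefficient formula. -/
def psSubst {k : Type*} [CommRing k] {σ τ : Type*} [Fintype σ] [DecidableEq σ]
    (a : σ → MvPowerSeries τ k) (f : MvPowerSeries σ k) : MvPowerSeries τ k :=
  fun e => ∑ d ∈ Finset.Iic (Finsupp.equivFunOnFinite.symm fun _ : σ => e.sum fun _ m => m),
    (MvPowerSeries.coeff d f) * MvPowerSeries.coeff e (∏ i, a i ^ d i)

/-- `E₁ = x₁ + x₂`. -/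
def E₁ : MvPowerSeries (Fin 2) BetaRing := X 0 + X 1
/-- `E₂ = x₁·x₂`. -/
def E₂ : MvPowerSeries (Fin 2) BetaRing := X 0 * X 1

/-- Membership in the subring `ℤ⟦E₁,E₂⟧ ⊂ k⟦x₁,x₂⟧`: power series in `E₁, E₂` with
integer coefficients. -/
def InZE₁E₂ (f : MvPowerSeries (Fin 2) BetaRing) : Prop :=
  ∃ g : MvPowerSeries (Fin 2) ℤ,
    f = psSubst ![E₁, E₂] (MvPowerSeries.map (Int.castRingHom BetaRing) g)

/-!
The coefficients of `p` are free, so a homomorphism out of `BetaRing` can turn `p` into any power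
series `f` with constant coefficient `1`. If `f` is symmetric and the target is a domain, then
`ρ₁` is sent to `(x₁ f - x₂ f) / (x₁ - x₂) = f`, while `E₁` and `E₂` are fixed. Since algebraic
independence can be checked after applying a homomorphism, it suffices to exhibit one `f` that
is algebraically independent of `E₁` and `E₂`: take `f = 1 + T x₁ x₂` over `ℤ[T]`.
-/

open Algebra (adjoin)
open Matrix (vecCons)

section AlgebraicIndependence

variable {R A : Type*} [CommRing R] [CommRing A] [Algebra R A]

theorem algebraicIndependent_vecCons_iff {n : ℕ} {a : A} {x : Fin n → A} :
    AlgebraicIndependent R (vecCons a x) ↔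
      AlgebraicIndependent R x ∧ Transcendental (adjoin R (Set.range x)) a := by
  rw [← AlgebraicIndependent.option_iff]
  refine algebraicIndependent_equiv' (finSuccEquiv n) ?_
  funext i
  cases i using Fin.cases <;> simp

theorem transcendental_algebraMap_add_algebraMap_mul {a b : R} {t : A} (ht : Transcendental R t)
    (ha : a ∈ nonZeroDivisors R) :
    Transcendental R (algebraMap R A b + algebraMap R A a * t) := by
  cases subsingleton_or_nontrivial R
  · exact is_transcendental_of_subsingleton R _
  have ha0 : a ≠ 0 := nonZeroDivisors.ne_zero ha
  have h := ht.aeval (.C a * .X + .C b) (by simp [Polynomial.natDegree_linear ha0])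
    (by rwa [Polynomial.leadingCoeff_linear ha0])
  simpa [add_comm] using h

theorem algebraicIndependent_vecCons_add_mul {n : ℕ} {t a b : A} {x : Fin n → A}
    (h : AlgebraicIndependent R (vecCons t x)) (ha : a ∈ adjoin R (Set.range x))
    (ha' : a ∈ nonZeroDivisors A) (hb : b ∈ adjoin R (Set.range x)) :
    AlgebraicIndependent R (vecCons (b + a * t) x) := by
  rw [algebraicIndependent_vecCons_iff] at h ⊢
  exact ⟨h.1, transcendental_algebraMap_add_algebraMap_mul (a := ⟨a, ha⟩) (b := ⟨b, hb⟩) h.2 <|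
    comap_nonZeroDivisors_le_of_injective (f := (adjoin R (Set.range x)).val)
      Subtype.val_injective ha'⟩

theorem algebraicIndependent_vecCons_algebraMap {S : Type*} [CommRing S] [Algebra R S]
    [Algebra S A] [IsScalarTower R S A] {n : ℕ} {t : S} {x : Fin n → A}
    (ht : Transcendental R t) (hx : AlgebraicIndependent S x) :
    AlgebraicIndependent R (vecCons (algebraMap S A t) x) := by
  have hsum : AlgebraicIndependent R (Sum.elim x (algebraMap S A ∘ fun _ : Unit ↦ t)) :=
    .sumElim_comp ((algebraicIndependent_singleton_iff ()).mpr ht) hx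
  let e : Fin (n + 1) ≃ Fin n ⊕ Unit := (finSuccEquiv n).trans (Equiv.optionEquivSumPUnit _)
  refine (algebraicIndependent_equiv' e ?_).mpr hsum
  funext i
  cases i using Fin.cases <;> simp [e]

theorem algebraicIndependent_esymm (σ R : Type*) [CommRing R] [Fintype σ] {n : ℕ}
    (hn : n ≤ Fintype.card σ) :
    AlgebraicIndependent R fun i : Fin n ↦ MvPolynomial.esymm σ R (i + 1) :=
  fun p q hpq ↦ MvPolynomial.esymmAlgHom_injective R hn <| Subtype.ext <| by
    simpa only [MvPolynomial.esymmAlgHom_apply] using hpq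

theorem algebraicIndependent_int_of_ringHom_comp {ι S T : Type*} [CommRing S] [CommRing T]
    [Algebra ℤ S] [Algebra ℤ T] (φ : S →+* T) {x : ι → S} (h : AlgebraicIndependent ℤ (φ ∘ x)) :
    AlgebraicIndependent ℤ x :=
  let φℤ : S →ₐ[ℤ] T := { φ with commutes' := fun n ↦ by simp }
  .of_comp φℤ h

end AlgebraicIndependence

theorem algebraicIndependent_X_add_X_X_mul_X (R : Type*) [CommRing R] :
    AlgebraicIndependent R ![(X 0 + X 1 : MvPowerSeries (Fin 2) R), X 0 * X 1] := by
  have h := (algebraicIndependent_esymm (Fin 2) R (n := 2) (by simp)).map'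
    (f := MvPolynomial.coeToMvPowerSeries.algHom R) (MvPolynomial.coe_injective (Fin 2) R)
  convert h using 1
  have hpairs : Finset.powersetCard 2 (Finset.univ : Finset (Fin 2)) = {Finset.univ} := rfl
  funext i
  fin_cases i
  · simp
  · simp [MvPolynomial.esymm, hpairs]

theorem algebraicIndependent_one_add_X_mul_X_mul_C (R : Type*) [CommRing R] :
    AlgebraicIndependent R
      ![(1 + X 0 * X 1 * C Polynomial.X : MvPowerSeries (Fin 2) (Polynomial R)),
        X 0 + X 1, X 0 * X 1] := by
  have hT : AlgebraicIndependent R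
      ![(C Polynomial.X : MvPowerSeries (Fin 2) (Polynomial R)), X 0 + X 1, X 0 * X 1] :=
    algebraicIndependent_vecCons_algebraMap (Polynomial.transcendental_X R)
      (algebraicIndependent_X_add_X_X_mul_X (Polynomial R))
  exact algebraicIndependent_vecCons_add_mul hT (Algebra.subset_adjoin ⟨1, rfl⟩)
    (mul_mem X_mem_nonzeroDivisors X_mem_nonzeroDivisors) (one_mem _)

theorem coeff_rename_equiv {σ τ R : Type*} [CommSemiring R] (e : σ ≃ τ) (f : MvPowerSeries σ R)
    (d : τ →₀ ℕ) : coeff d (rename e f) = coeff (d.equivMapDomain e.symm) f := by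
  have hd : (d.equivMapDomain e.symm).embDomain e.toEmbedding = d := by
    rw [Finsupp.embDomain_eq_mapDomain, Equiv.coe_toEmbedding,
      ← Finsupp.equivMapDomain_eq_mapDomain, ← Finsupp.equivMapDomain_trans, Equiv.symm_trans_self,
      Finsupp.equivMapDomain_refl]
  have h := coeff_embDomain_rename e.toEmbedding f (d.equivMapDomain e.symm)
  rwa [hd] at h

section Specialization

variable {A : Type*} [CommRing A]

theorem exists_map_genericP_eq {f : MvPowerSeries (Fin 2) A} (hf : constantCoeff f = 1) :
    ∃ φ : BetaRing →+* A, map φ genericP = f := by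
  let index (ab : ℕ × ℕ) : Fin 2 →₀ ℕ := Finsupp.equivFunOnFinite.symm ![ab.1, ab.2]
  refine ⟨(MvPolynomial.aeval fun ab ↦ coeff (index ab.1) f : BetaRing →ₐ[ℤ] A).toRingHom, ?_⟩
  ext d
  have hd : index (d 0, d 1) = d := by
    ext i
    fin_cases i <;> rfl
  change MvPolynomial.aeval _ (genericP d) = coeff d f
  unfold genericP
  split_ifs with h
  · have hd0 : d = 0 := by
      rw [← hd, h]
      ext i
      fin_cases i <;> rfl
    rw [map_one, hd0, coeff_zero_eq_constantCoeff_apply, hf]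
  · simp [hd]

theorem map_swapPS {k : Type*} [CommRing k] (φ : k →+* A) (f : MvPowerSeries (Fin 2) k) :
    map φ (swapPS f) = swapPS (map φ f) :=
  rfl

theorem swapPS_eq_rename (f : MvPowerSeries (Fin 2) A) :
    swapPS f = rename (Equiv.swap 0 1) f := by
  ext d
  rw [coeff_rename_equiv, Equiv.symm_swap]
  rfl

theorem exists_map_eq_of_swapPS_eq_self [IsDomain A] {ρ : MvPowerSeries (Fin 2) BetaRing}
    (hρ : (X 0 - X 1) * ρ = X 0 * genericP - X 1 * swapPS genericP)
    {f : MvPowerSeries (Fin 2) A} (hf : constantCoeff f = 1) (hswap : swapPS f = f) :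
    ∃ φ : BetaRing →+* A, map φ ρ = f := by
  obtain ⟨φ, hφ⟩ := exists_map_genericP_eq hf
  have hne : (X 0 - X 1 : MvPowerSeries (Fin 2) A) ≠ 0 :=
    sub_ne_zero.mpr fun h ↦ zero_ne_one (X_inj.mp h)
  refine ⟨φ, mul_left_cancel₀ hne ?_⟩
  calc (X 0 - X 1) * map φ ρ = map φ ((X 0 - X 1) * ρ) := by simp
    _ = X 0 * f - X 1 * f := by rw [hρ]; simp [map_swapPS, hφ, hswap]
    _ = (X 0 - X 1) * f := (sub_mul ..).symm

end Specialization

theorem stmt15 (ρ₁ : MvPowerSeries (Fin 2) BetaRing)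
    (hρ₁ : ((X 0 : MvPowerSeries (Fin 2) BetaRing) - X 1) * ρ₁ =
      (X 0 : MvPowerSeries (Fin 2) BetaRing) * genericP -
        (X 1 : MvPowerSeries (Fin 2) BetaRing) * swapPS genericP) :
    AlgebraicIndependent ℤ ![ρ₁, E₁, E₂] := by
  let f : MvPowerSeries (Fin 2) (Polynomial ℤ) := 1 + X 0 * X 1 * C Polynomial.X
  have hswap : swapPS f = f := by simp [f, swapPS_eq_rename, mul_comm]
  have hconst : constantCoeff f = 1 := by simp [f]
  obtain ⟨φ, hφ⟩ := exists_map_eq_of_swapPS_eq_self hρ₁ hconst hswap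
  have hmap : map φ ∘ ![ρ₁, E₁, E₂] = ![f, X 0 + X 1, X 0 * X 1] := by
    funext i
    fin_cases i <;> simp [hφ, E₁, E₂]
  refine algebraicIndependent_int_of_ringHom_comp (map φ) ?_
  rw [hmap]
  exact algebraicIndependent_one_add_X_mul_X_mul_C ℤ
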